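/- The quotient of the direct product A(D4) × ℤ by the normal closure of the single element (((a1*a2*a3*b)^3)⁻¹, u), where u is a generator of ℤ, is isomorphic to A(D4). -/

import Mathlib

/-- Relations of the Artin group of type `D₄` on generators `a1 = of 0`, `a2 = of 1`,
`a3 = of 2`, `b = of 3`: the `aᵢ` pairwise commute and each `aᵢ` braids with `b`. -/
def AD4rels : Set (FreeGroup (Fin 4)) :=
  {FreeGroup.of 0 * FreeGroup.of 1 * (FreeGroup.of 1 * FreeGroup.of 0)⁻¹,
   FreeGroup.of 0 * FreeGroup.of 2 * (FreeGroup.of 2 * FreeGroup.of 0)⁻¹,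
   FreeGroup.of 1 * FreeGroup.of 2 * (FreeGroup.of 2 * FreeGroup.of 1)⁻¹,
   FreeGroup.of 0 * FreeGroup.of 3 * FreeGroup.of 0 *
      (FreeGroup.of 3 * FreeGroup.of 0 * FreeGroup.of 3)⁻¹,
   FreeGroup.of 1 * FreeGroup.of 3 * FreeGroup.of 1 *
      (FreeGroup.of 3 * FreeGroup.of 1 * FreeGroup.of 3)⁻¹,
   FreeGroup.of 2 * FreeGroup.of 3 * FreeGroup.of 2 *
      (FreeGroup.of 3 * FreeGroup.of 2 * FreeGroup.of 3)⁻¹}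

/-- The Artin group of type `D₄`, as a presented group. -/
abbrev AD4 : Type := PresentedGroup AD4rels

/-- The fundamental element `Δ = (a1 a2 a3 b)^3` of `A(D₄)`. -/
def Δ : AD4 :=
  (PresentedGroup.of 0 * PresentedGroup.of 1 * PresentedGroup.of 2 * PresentedGroup.of 3) ^ 3

/-- The normal closure of the single element `(Δ⁻¹, u)` in `A(D₄) × ℤ`, where `u` is a
generator of the infinite cyclic group `ℤ`. -/
def N : Subgroup (AD4 × Multiplicative ℤ) :=
  Subgroup.normalClosure {(Δ⁻¹, Multiplicative.ofAdd (1 : ℤ))}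

instance : N.Normal := Subgroup.normalClosure_normal

/-!
Folding `D₄` onto `B₃` reduces the commutation of `Δ` with a leaf generator to braid relations of
length three and four. As `Δ` is also a power of `a1 a2 a3 b`, it commutes with `b` too, so it is
central. For central `z` in a group `G`, the map `(g, n) ↦ g zⁿ` is a surjective homomorphism
`G × ℤ → G`, whose kernel consists of the powers of `(z⁻¹, 1)`.
-/

section Monoid

variable {M : Type*} [Monoid M] {x y z w b : M}

theorem commute_mul_mul_of_braid_of_commute {a t : M} (h : a * b * a = b * a * b)
    (ht : Commute t b) : Commute (b * a * t * (a * b)) a := by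
  have hba : SemiconjBy (b * a) b a := by rw [SemiconjBy, ← h, mul_assoc]
  have hab : SemiconjBy (a * b) a b := by rw [SemiconjBy, h, mul_assoc]
  exact (hba.mul_left ht).mul_left hab

-- Folding `D₄` to `B₃`: this is the braid relation of length four between `y z` and `b`.
theorem commute_mul_mul_of_braid_of_braid (hyz : Commute y z)
    (hy : y * b * y = b * y * b) (hz : z * b * z = b * z * b) :
    Commute (y * z * b * (y * z)) b := by
  have key : y * z * b * (y * z) = y * b * z * (b * y) := calc
    y * z * b * (y * z) = y * z * b * (z * y) := by rw [hyz.eq]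
    _ = y * (z * b * z) * y := by simp only [mul_assoc]
    _ = y * (b * z * b) * y := by rw [hz]
    _ = y * b * z * (b * y) := by simp only [mul_assoc]
  rw [key]
  exact commute_mul_mul_of_braid_of_commute hy.symm hyz.symm

theorem commute_mul_mul_pow_three_of_braid (hxw : Commute x w) (hx : x * b * x = b * x * b)
    (hw : Commute (w * b * w) b) : Commute ((x * w * b) ^ 3) x := by
  have key : (x * w * b) ^ 3 = x * w * (b * x * (w * b * w) * (x * b)) := calc
    (x * w * b) ^ 3 = x * w * (b * x * (w * b) * (x * w) * b) := by
      simp only [pow_three, mul_assoc]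
    _ = x * w * (b * x * (w * b) * (w * x) * b) := by rw [hxw.eq]
    _ = x * w * (b * x * (w * b * w) * (x * b)) := by simp only [mul_assoc]
  rw [key]
  exact ((Commute.refl x).mul_left hxw.symm).mul_left (commute_mul_mul_of_braid_of_commute hx hw)

theorem commute_mul_mul_mul_pow_three_of_braid (hxy : Commute x y) (hxz : Commute x z)
    (hyz : Commute y z) (hx : x * b * x = b * x * b) (hy : y * b * y = b * y * b)
    (hz : z * b * z = b * z * b) :
    Commute ((x * y * z * b) ^ 3) x := by
  rw [mul_assoc x y z]
  exact commute_mul_mul_pow_three_of_braid (hxy.mul_right hxz) hx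
    (commute_mul_mul_of_braid_of_braid hyz hy hz)

end Monoid

namespace AD4

open PresentedGroup

theorem commute_of_of {i j : Fin 4} (hi : i ≠ 3) (hj : j ≠ 3) : Commute (of i : AD4) (of j) := by
  wlog hij : i < j generalizing i j
  · obtain rfl | hji := (not_lt.mp hij).eq_or_lt
    · exact Commute.refl _
    · exact (this hj hi hji).symm
  apply mk_eq_mk_of_mul_inv_mem
  fin_cases i <;> fin_cases j <;> simp_all [AD4rels]

theorem braid_of {i : Fin 4} (hi : i ≠ 3) :
    (of i * of 3 * of i : AD4) = of 3 * of i * of 3 := by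
  apply mk_eq_mk_of_mul_inv_mem
  fin_cases i <;> simp_all [AD4rels]

theorem commute_mul_pow_three_of {i j k : Fin 4} (hi : i ≠ 3) (hj : j ≠ 3) (hk : k ≠ 3) :
    Commute ((of i * of j * of k * of 3 : AD4) ^ 3) (of i) :=
  commute_mul_mul_mul_pow_three_of_braid (commute_of_of hi hj) (commute_of_of hi hk)
    (commute_of_of hj hk) (braid_of hi) (braid_of hj) (braid_of hk)

theorem commute_Δ_of_of_ne {i : Fin 4} (hi : i ≠ 3) : Commute Δ (of i) := by
  have h01 : Commute (of 0 : AD4) (of 1) := commute_of_of (by decide) (by decide)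
  have h012 : Commute (of 0 * of 1 : AD4) (of 2) :=
    (commute_of_of (by decide) (by decide)).mul_left (commute_of_of (by decide) (by decide))
  have Δ_eq_one : Δ = (of 1 * of 0 * of 2 * of 3) ^ 3 := by rw [Δ, h01.eq]
  have Δ_eq_two : Δ = (of 2 * of 0 * of 1 * of 3) ^ 3 := by
    rw [Δ, h012.eq, ← mul_assoc]
  obtain rfl | rfl | rfl : i = 0 ∨ i = 1 ∨ i = 2 := by omega
  · exact commute_mul_pow_three_of (by decide) (by decide) (by decide)
  · rw [Δ_eq_one]
    exact commute_mul_pow_three_of (by decide) (by decide) (by decide)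
  · rw [Δ_eq_two]
    exact commute_mul_pow_three_of (by decide) (by decide) (by decide)

theorem commute_Δ_of (i : Fin 4) : Commute Δ (of i) := by
  obtain rfl | hi := eq_or_ne i 3
  · have leaves : Commute Δ (of 0 * of 1 * of 2) :=
      ((commute_Δ_of_of_ne (by decide)).mul_right (commute_Δ_of_of_ne (by decide))).mul_right
        (commute_Δ_of_of_ne (by decide))
    have coxeter : Commute Δ (of 0 * of 1 * of 2 * of 3) := Commute.pow_self _ 3
    simpa only [inv_mul_cancel_left] using leaves.inv_right.mul_right coxeter
  · exact commute_Δ_of_of_ne hi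

theorem Δ_mem_center : Δ ∈ Subgroup.center AD4 := by
  rw [Subgroup.mem_center_iff]
  intro g
  exact Subgroup.mem_centralizer_singleton_iff.mp
    (generated_by _ (Subgroup.centralizer {Δ})
      (fun i ↦ Subgroup.mem_centralizer_singleton_iff.mpr (commute_Δ_of i).symm.eq) g)

end AD4

section Quotient

open Multiplicative

variable {G : Type*} [Group G] {z : G}

/-- The homomorphism `G × ℤ → G`, `(g, n) ↦ g zⁿ`, for a central element `z`. -/
def prodIntHom (hz : z ∈ Subgroup.center G) : G × Multiplicative ℤ →* G :=
  (MonoidHom.id G).noncommCoprod (zpowersHom G z) fun g n ↦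
    (show Commute g z from Subgroup.mem_center_iff.mp hz g).zpow_right n.toAdd

theorem prodIntHom_apply (hz : z ∈ Subgroup.center G) (p : G × Multiplicative ℤ) :
    prodIntHom hz p = p.1 * z ^ p.2.toAdd :=
  rfl

theorem prodIntHom_surjective (hz : z ∈ Subgroup.center G) :
    Function.Surjective (prodIntHom hz) :=
  fun g ↦ ⟨(g, 1), by simp [prodIntHom_apply]⟩

theorem ker_prodIntHom (hz : z ∈ Subgroup.center G) :
    (prodIntHom hz).ker = Subgroup.normalClosure {(z⁻¹, ofAdd (1 : ℤ))} := by
  apply le_antisymm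
  · rintro ⟨g, n⟩ hgn
    rw [MonoidHom.mem_ker, prodIntHom_apply] at hgn
    have hpow : (g, n) = (z⁻¹, ofAdd (1 : ℤ)) ^ n.toAdd := by
      rw [Prod.pow_mk, inv_zpow, ← eq_inv_of_mul_eq_one_left hgn, ← ofAdd_zsmul]
      simp
    rw [hpow]
    exact Subgroup.zpow_mem _ (Subgroup.subset_normalClosure (Set.mem_singleton _)) _
  · apply Subgroup.normalClosure_le_normal
    rw [Set.singleton_subset_iff]
    simp [MonoidHom.mem_ker, prodIntHom_apply]

/-- The isomorphism `(G × ℤ) ⧸ ⟨⟨(z⁻¹, 1)⟩⟩ ≃* G` for a central element `z`, which eliminates the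
generator of `ℤ` by identifying it with `z`. -/
noncomputable def quotientNormalClosureEquiv (hz : z ∈ Subgroup.center G) :
    (G × Multiplicative ℤ) ⧸ Subgroup.normalClosure {(z⁻¹, ofAdd (1 : ℤ))} ≃* G :=
  (QuotientGroup.quotientMulEquivOfEq (ker_prodIntHom hz).symm).trans
    (QuotientGroup.quotientKerEquivOfSurjective _ (prodIntHom_surjective hz))

end Quotient

/-- Corollary 9: `(A(D₄) × ℤ)` modulo the relation `u = (a1 a2 a3 b)^3` is isomorphic to
`A(D₄)` (the algebraic content of `PMod(1,1,2) ≅ A(D₄)`). -/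
theorem stmt_14 :
    Nonempty ((AD4 × Multiplicative ℤ) ⧸ N ≃* AD4) :=
  ⟨quotientNormalClosureEquiv AD4.Δ_mem_center⟩
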